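/- Let Ω, Ω' ⊆ ℝ³ be open, let f = (F, f₃) : Ω → ℝ³ be a smooth map satisfying the contact equations with J_F > 0 on Ω, and let g = (G, g₃) : Ω' → Ω be a smooth conformal map. Then the cocycle condition S_CL(f ∘ g) = (S_CL(f) ∘ g)·(ZG)² + S_CL(g) holds on Ω'. -/

import Mathlib

noncomputable section

open Complex

/-- The underlying space of the first Heisenberg group: ℝ³ with coordinates (x, y, t). -/
abbrev Heis : Type := ℝ × ℝ × ℝ

/-- The left-invariant vector field X = ∂/∂x + 2y ∂/∂t, as a derivation. -/
def XD {E : Type*} [NormedAddCommGroup E] [NormedSpace ℝ E] (u : Heis → E) (p : Heis) : E :=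
  fderiv ℝ u p (1, 0, 2 * p.2.1)

/-- The left-invariant vector field Y = ∂/∂y − 2x ∂/∂t, as a derivation. -/
def YD {E : Type*} [NormedAddCommGroup E] [NormedSpace ℝ E] (u : Heis → E) (p : Heis) : E :=
  fderiv ℝ u p (0, 1, -(2 * p.1))

/-- The vector field T = ∂/∂t, as a derivation. -/
def TD {E : Type*} [NormedAddCommGroup E] [NormedSpace ℝ E] (u : Heis → E) (p : Heis) : E :=
  fderiv ℝ u p (0, 0, 1)

/-- Z = (X − iY)/2. -/
def ZD (u : Heis → ℂ) (p : Heis) : ℂ := (XD u p - Complex.I * YD u p) / 2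

/-- Z̄ = (X + iY)/2. -/
def ZbD (u : Heis → ℂ) (p : Heis) : ℂ := (XD u p + Complex.I * YD u p) / 2

/-- The complexification F = f₁ + i f₂ of the horizontal components. -/
def CF (f1 f2 : Heis → ℝ) : Heis → ℂ := fun p => (f1 p : ℂ) + (f2 p : ℂ) * Complex.I

/-- Complexification of a real-valued function. -/
def Cplx (u : Heis → ℝ) : Heis → ℂ := fun p => (u p : ℂ)

/-- The horizontal Jacobian J_F = Xf₁·Yf₂ − Yf₁·Xf₂. -/
def JF (f1 f2 : Heis → ℝ) (p : Heis) : ℝ := XD f1 p * YD f2 p - YD f1 p * XD f2 p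

/-- The contact equations on Ω. -/
def ContactOn (f1 f2 f3 : Heis → ℝ) (Ω : Set Heis) : Prop :=
  ∀ p ∈ Ω, XD f3 p - 2 * f2 p * XD f1 p + 2 * f1 p * XD f2 p = 0 ∧
           YD f3 p - 2 * f2 p * YD f1 p + 2 * f1 p * YD f2 p = 0

/-- f = (f₁,f₂,f₃) is conformal on Ω: smooth, contact, J_F > 0, and the conformality
equations hold. -/
def ConformalOn (f1 f2 f3 : Heis → ℝ) (Ω : Set Heis) : Prop :=
  ContDiffOn ℝ (⊤ : ℕ∞) f1 Ω ∧ ContDiffOn ℝ (⊤ : ℕ∞) f2 Ω ∧ ContDiffOn ℝ (⊤ : ℕ∞) f3 Ω ∧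
  ContactOn f1 f2 f3 Ω ∧ (∀ p ∈ Ω, 0 < JF f1 f2 p) ∧
  ∀ p ∈ Ω, (XD f1 p) ^ 2 + (XD f2 p) ^ 2 = (YD f1 p) ^ 2 + (YD f2 p) ^ 2 ∧
           XD f1 p * YD f1 p + XD f2 p * YD f2 p = 0

/-- The sub-Laplacian Δ_H = X² + Y². -/
def LapH {E : Type*} [NormedAddCommGroup E] [NormedSpace ℝ E] (u : Heis → E) (p : Heis) : E :=
  XD (XD u) p + YD (YD u) p

/-- The CR Schwarzian derivative S_CR(f) = (1/2)·J_F·Z²(J_F⁻¹). -/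
def SCR (f1 f2 : Heis → ℝ) (p : Heis) : ℂ :=
  (1 / 2 : ℂ) * (JF f1 f2 p : ℂ) * ZD (ZD (fun q => (((JF f1 f2 q)⁻¹ : ℝ) : ℂ))) p

/-- The classical type Schwarzian S_CL(f) = Z³F/ZF − (3/2)(Z²F/ZF)². -/
def SCL (f1 f2 : Heis → ℝ) (p : Heis) : ℂ :=
  ZD (ZD (ZD (CF f1 f2))) p / ZD (CF f1 f2) p
    - (3 / 2 : ℂ) * (ZD (ZD (CF f1 f2)) p / ZD (CF f1 f2) p) ^ 2

/-- The Preschwarzian Pf = Z(ln J_F). -/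
def PS (f1 f2 : Heis → ℝ) (p : Heis) : ℂ := ZD (Cplx (fun q => Real.log (JF f1 f2 q))) p

/-- The map (f₁,f₂,f₃) packaged as a map Heis → Heis. -/
def Fmap (f1 f2 f3 : Heis → ℝ) (p : Heis) : Heis := (f1 p, f2 p, f3 p)

theorem ZD_congr {u v : Heis → ℂ} {Ω : Set Heis} (hΩ : IsOpen Ω) (h : ∀ q ∈ Ω, u q = v q)
    {p : Heis} (hp : p ∈ Ω) : ZD u p = ZD v p := by
  have he : u =ᶠ[nhds p] v := Filter.eventuallyEq_of_mem (hΩ.mem_nhds hp) h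
  simp only [ZD, XD, YD, he.fderiv_eq]

theorem ZD_mul {u v : Heis → ℂ} {p : Heis} (hu : DifferentiableAt ℝ u p)
    (hv : DifferentiableAt ℝ v p) :
    ZD (fun q => u q * v q) p = ZD u p * v p + u p * ZD v p := by
  simp only [ZD, XD, YD, fderiv_fun_mul hu hv, add_apply,
    smul_apply, smul_eq_mul]
  ring

theorem ZD_add {u v : Heis → ℂ} {p : Heis} (hu : DifferentiableAt ℝ u p)
    (hv : DifferentiableAt ℝ v p) :
    ZD (fun q => u q + v q) p = ZD u p + ZD v p := by
  simp only [ZD, XD, YD, fderiv_fun_add hu hv, add_apply]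
  ring

theorem ContDiffOn.ZD {u : Heis → ℂ} {Ω : Set Heis} (hΩ : IsOpen Ω)
    (hu : ContDiffOn ℝ (⊤ : ℕ∞) u Ω) : ContDiffOn ℝ (⊤ : ℕ∞) (ZD u) Ω := by
  have hd : ContDiffOn ℝ (⊤ : ℕ∞) (fderiv ℝ u) Ω := hu.fderiv_of_isOpen hΩ le_rfl
  unfold _root_.ZD XD YD
  have hX : ContDiffOn ℝ (⊤ : ℕ∞) (fun p : Heis => fderiv ℝ u p (1, 0, 2 * p.2.1)) Ω :=
    hd.clm_apply (by fun_prop)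
  have hY : ContDiffOn ℝ (⊤ : ℕ∞) (fun p : Heis => fderiv ℝ u p (0, 1, -(2 * p.1))) Ω :=
    hd.clm_apply (by fun_prop)
  exact (hX.sub (contDiffOn_const.mul hY)).div_const 2

theorem ContDiffOn.differentiableAt_of_isOpen {E : Type*} [NormedAddCommGroup E]
    [NormedSpace ℝ E] {u : Heis → E} {Ω : Set Heis} (hΩ : IsOpen Ω)
    (hu : ContDiffOn ℝ (⊤ : ℕ∞) u Ω) {p : Heis} (hp : p ∈ Ω) : DifferentiableAt ℝ u p :=
  (hu.contDiffAt (hΩ.mem_nhds hp)).differentiableAt (by simp)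

theorem ContDiffOn.CF {f1 f2 : Heis → ℝ} {Ω : Set Heis} (hf1 : ContDiffOn ℝ (⊤ : ℕ∞) f1 Ω)
    (hf2 : ContDiffOn ℝ (⊤ : ℕ∞) f2 Ω) : ContDiffOn ℝ (⊤ : ℕ∞) (CF f1 f2) Ω :=
  (Complex.ofRealCLM.contDiff.comp_contDiffOn hf1).add
    ((Complex.ofRealCLM.contDiff.comp_contDiffOn hf2).mul contDiffOn_const)

theorem fderiv_CF_apply {f1 f2 : Heis → ℝ} {p : Heis} (h1 : DifferentiableAt ℝ f1 p)
    (h2 : DifferentiableAt ℝ f2 p) (v : Heis) :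
    fderiv ℝ (CF f1 f2) p v = (fderiv ℝ f1 p v : ℂ) + (fderiv ℝ f2 p v : ℂ) * Complex.I := by
  have h1' : HasFDerivAt (fun q => (f1 q : ℂ)) (Complex.ofRealCLM.comp (fderiv ℝ f1 p)) p :=
    Complex.ofRealCLM.hasFDerivAt.comp p h1.hasFDerivAt
  have h2' : HasFDerivAt (fun q => (f2 q : ℂ)) (Complex.ofRealCLM.comp (fderiv ℝ f2 p)) p :=
    Complex.ofRealCLM.hasFDerivAt.comp p h2.hasFDerivAt
  have h : HasFDerivAt (CF f1 f2) _ p := h1'.add (h2'.mul_const Complex.I)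
  rw [h.fderiv]
  simp [mul_comm]

theorem ZD_CF {f1 f2 : Heis → ℝ} {p : Heis} (h1 : DifferentiableAt ℝ f1 p)
    (h2 : DifferentiableAt ℝ f2 p) :
    ZD (CF f1 f2) p = ((XD f1 p + YD f2 p : ℝ) + (XD f2 p - YD f1 p : ℝ) * Complex.I) / 2 := by
  simp only [ZD, XD, YD, fderiv_CF_apply h1 h2]
  push_cast
  linear_combination (-(fderiv ℝ f2 p (0, 1, -(2 * p.1)) : ℂ) / 2) * Complex.I_mul_I

theorem ZD_CF_ne_zero {f1 f2 : Heis → ℝ} {p : Heis} (h1 : DifferentiableAt ℝ f1 p)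
    (h2 : DifferentiableAt ℝ f2 p) (hJ : 0 < JF f1 f2 p) : ZD (CF f1 f2) p ≠ 0 := by
  rw [ZD_CF h1 h2]
  intro h
  have h' : ((XD f1 p + YD f2 p : ℝ) : ℂ) + (XD f2 p - YD f1 p : ℝ) * Complex.I = 0 := by
    linear_combination 2 * h
  have hre := congrArg Complex.re h'
  have him := congrArg Complex.im h'
  simp only [Complex.add_re, Complex.add_im, Complex.mul_re,
    Complex.mul_im, Complex.ofReal_re, Complex.ofReal_im, Complex.I_re, Complex.I_im,
    Complex.zero_re, Complex.zero_im] at hre him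
  unfold JF at hJ
  have hY2 : YD f2 p = -XD f1 p := by linear_combination hre
  have hY1 : YD f1 p = XD f2 p := by linear_combination -him
  rw [hY1, hY2] at hJ
  nlinarith [sq_nonneg (XD f1 p), sq_nonneg (XD f2 p)]

/-- Cauchy–Riemann equations for a conformal map. -/
theorem ConformalOn.cauchyRiemann {g1 g2 g3 : Heis → ℝ} {Ω : Set Heis}
    (hg : ConformalOn g1 g2 g3 Ω) {p : Heis} (hp : p ∈ Ω) :
    YD g2 p = XD g1 p ∧ YD g1 p = -XD g2 p := by
  obtain ⟨-, -, -, -, hJ, hc⟩ := hg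
  have hJp := hJ p hp
  obtain ⟨hn, ho⟩ := hc p hp
  unfold JF at hJp
  generalize XD g1 p = a, XD g2 p = b, YD g1 p = c, YD g2 p = d at *
  have hsq : (a * d - c * b) ^ 2 = (a ^ 2 + b ^ 2) ^ 2 := by
    linear_combination (-(a ^ 2 + b ^ 2)) * hn - (a * c + b * d) * ho
  have hdet : a * d - c * b = a ^ 2 + b ^ 2 :=
    (pow_left_inj₀ hJp.le (by positivity) two_ne_zero).1 hsq
  have hsum : (d - a) ^ 2 + (c + b) ^ 2 = 0 := by linear_combination -hn - 2 * hdet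
  constructor <;> nlinarith [sq_nonneg (d - a), sq_nonneg (c + b)]

/-- Chain rule for `Z` along a conformal map. -/
theorem ZD_comp_conformal {g1 g2 g3 : Heis → ℝ} {Ω' : Set Heis} (hΩ' : IsOpen Ω')
    (hg : ConformalOn g1 g2 g3 Ω') {u : Heis → ℂ} {p : Heis} (hp : p ∈ Ω')
    (hu : DifferentiableAt ℝ u (Fmap g1 g2 g3 p)) :
    ZD (fun q => u (Fmap g1 g2 g3 q)) p = ZD u (Fmap g1 g2 g3 p) * ZD (CF g1 g2) p := by
  obtain ⟨hd, hc⟩ := hg.cauchyRiemann hp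
  obtain ⟨h1, h2, h3, hcon, -, -⟩ := hg
  have d1 := h1.differentiableAt_of_isOpen hΩ' hp
  have d2 := h2.differentiableAt_of_isOpen hΩ' hp
  have d3 := h3.differentiableAt_of_isOpen hΩ' hp
  have hG : HasFDerivAt (Fmap g1 g2 g3)
      ((fderiv ℝ g1 p).prod ((fderiv ℝ g2 p).prod (fderiv ℝ g3 p))) p :=
    d1.hasFDerivAt.prodMk (d2.hasFDerivAt.prodMk d3.hasFDerivAt)
  have hcomp : fderiv ℝ (fun q => u (Fmap g1 g2 g3 q)) p = _ :=
    (hu.hasFDerivAt.comp p hG).fderiv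
  obtain ⟨hX, hY⟩ := hcon p hp
  have key : ∀ a b c : ℝ, c - 2 * g2 p * a + 2 * g1 p * b = 0 →
      fderiv ℝ u (Fmap g1 g2 g3 p) (a, b, c)
        = a * XD u (Fmap g1 g2 g3 p) + b * YD u (Fmap g1 g2 g3 p) := by
    intro a b c h
    have hv : ((a, b, c) : Heis) = a • ((1, 0, 2 * (Fmap g1 g2 g3 p).2.1) : Heis)
        + b • ((0, 1, -(2 * (Fmap g1 g2 g3 p).1)) : Heis) := by
      ext <;> simp [Fmap]
      linear_combination h
    rw [hv, map_add, map_smul, map_smul, Complex.real_smul, Complex.real_smul]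
    rfl
  have eX : XD (fun q => u (Fmap g1 g2 g3 q)) p = _ :=
    (congrArg (fun L => L (1, 0, 2 * p.2.1)) hcomp).trans (key _ _ _ hX)
  have eY : YD (fun q => u (Fmap g1 g2 g3 q)) p = _ :=
    (congrArg (fun L => L (0, 1, -(2 * p.1))) hcomp).trans (key _ _ _ hY)
  change _ = ((XD g1 p : ℝ) : ℂ) * _ + ((XD g2 p : ℝ) : ℂ) * _ at eX
  change _ = ((YD g1 p : ℝ) : ℂ) * _ + ((YD g2 p : ℝ) : ℂ) * _ at eY
  rw [hc, hd] at eY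
  rw [ZD_CF d1 d2, hc, hd, ZD, eX, eY, ZD]
  push_cast
  linear_combination (((XD g2 p : ℝ) : ℂ) * YD u (Fmap g1 g2 g3 p) / 2) * Complex.I_mul_I

/-- right cocycle condition for the classical type Schwarzian:
S_CL(f ∘ g) = (S_CL(f) ∘ g)·(ZG)² + S_CL(g) on Ω', where f is a smooth positively
oriented contact map on Ω and g : Ω' → Ω is a smooth conformal map. -/
theorem stmt_8 (Ω Ω' : Set Heis) (hΩ : IsOpen Ω) (hΩ' : IsOpen Ω')
    (f1 f2 f3 : Heis → ℝ)
    (hf1 : ContDiffOn ℝ (⊤ : ℕ∞) f1 Ω) (hf2 : ContDiffOn ℝ (⊤ : ℕ∞) f2 Ω)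
    (hf3 : ContDiffOn ℝ (⊤ : ℕ∞) f3 Ω)
    (hcont : ContactOn f1 f2 f3 Ω) (hJ : ∀ p ∈ Ω, 0 < JF f1 f2 p)
    (g1 g2 g3 : Heis → ℝ) (hg : ConformalOn g1 g2 g3 Ω')
    (hmaps : ∀ p ∈ Ω', Fmap g1 g2 g3 p ∈ Ω) :
    ∀ p ∈ Ω',
      SCL (fun q => f1 (Fmap g1 g2 g3 q)) (fun q => f2 (Fmap g1 g2 g3 q)) p
        = SCL f1 f2 (Fmap g1 g2 g3 p) * (ZD (CF g1 g2) p) ^ 2 + SCL g1 g2 p := by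
  intro p hp
  set φ := Fmap g1 g2 g3
  have hF := hf1.CF hf2
  have hG := hg.1.CF hg.2.1
  set F := CF f1 f2 with hFdef
  set G := CF g1 g2 with hGdef
  have hZF := hF.ZD hΩ
  have hZZF := hZF.ZD hΩ
  have hZG := hG.ZD hΩ'
  have hZZG := hZG.ZD hΩ'
  have smooth_φ : ContDiffOn ℝ (⊤ : ℕ∞) φ Ω' := hg.1.prodMk (hg.2.1.prodMk hg.2.2.1)
  have smooth_comp : ∀ {u : Heis → ℂ}, ContDiffOn ℝ (⊤ : ℕ∞) u Ω →
      ContDiffOn ℝ (⊤ : ℕ∞) (fun q => u (φ q)) Ω' := fun hu => hu.comp smooth_φ hmaps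
  have chain : ∀ {u : Heis → ℂ}, ContDiffOn ℝ (⊤ : ℕ∞) u Ω → ∀ q ∈ Ω',
      ZD (fun r => u (φ r)) q = ZD u (φ q) * ZD G q := fun hu q hq =>
    ZD_comp_conformal hΩ' hg hq (hu.differentiableAt_of_isOpen hΩ (hmaps q hq))
  have first : ∀ q ∈ Ω', ZD (fun r => F (φ r)) q = ZD F (φ q) * ZD G q := chain hF
  have second : ∀ q ∈ Ω', ZD (ZD fun r => F (φ r)) q
      = ZD (ZD F) (φ q) * (ZD G q * ZD G q) + ZD F (φ q) * ZD (ZD G) q := by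
    intro q hq
    rw [ZD_congr hΩ' first hq, ZD_mul ((smooth_comp hZF).differentiableAt_of_isOpen hΩ' hq)
      (hZG.differentiableAt_of_isOpen hΩ' hq), chain hZF q hq]
    ring
  have third : ZD (ZD (ZD fun r => F (φ r))) p
      = ZD (ZD (ZD F)) (φ p) * ZD G p ^ 3 + 3 * ZD (ZD F) (φ p) * ZD G p * ZD (ZD G) p
        + ZD F (φ p) * ZD (ZD (ZD G)) p := by
    have dF := (smooth_comp hZF).differentiableAt_of_isOpen hΩ' hp
    have dFF := (smooth_comp hZZF).differentiableAt_of_isOpen hΩ' hp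
    have dG := hZG.differentiableAt_of_isOpen hΩ' hp
    have dGG := hZZG.differentiableAt_of_isOpen hΩ' hp
    rw [ZD_congr hΩ' second hp, ZD_add (dFF.fun_mul (dG.fun_mul dG)) (dF.fun_mul dGG),
      ZD_mul dFF (dG.fun_mul dG), ZD_mul dG dG, ZD_mul dF dGG, chain hZF p hp, chain hZZF p hp]
    ring
  have hF0 : ZD F (φ p) ≠ 0 :=
    ZD_CF_ne_zero (hf1.differentiableAt_of_isOpen hΩ (hmaps p hp))
      (hf2.differentiableAt_of_isOpen hΩ (hmaps p hp)) (hJ _ (hmaps p hp))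
  have hG0 : ZD G p ≠ 0 :=
    ZD_CF_ne_zero (hg.1.differentiableAt_of_isOpen hΩ' hp)
      (hg.2.1.differentiableAt_of_isOpen hΩ' hp) (hg.2.2.2.2.1 p hp)
  have hcomp : CF (fun q => f1 (φ q)) (fun q => f2 (φ q)) = fun r => F (φ r) := rfl
  simp only [SCL, hcomp, ← hFdef, ← hGdef]
  rw [third, second p hp, first p hp]
  field_simp
  ring
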